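/- arXiv:1605.01243 — 2 statements merged into one kernel-verified Lean document; each statement's English description precedes it below -/
import Mathlib

section
/- Let T > 0 and θ > 1 be real numbers and set γ = (θ−1)/θ. Then there exists a constant C > 0, depending only on T and θ, such that for every positive integer n, the step sizes of the power time grid satisfy ∑_{k=1}^{n} s_k^θ ≤ C n^{−(θ−1)} (1 + log n). -/
open Finset

/-! Since `z ↦ z ^ (γ - 1)` is decreasing for `γ ≤ 1`, the `k`-th step is at most
`T k ^ (γ - 1) / n ^ γ`. For the critical exponent `γ = (θ - 1) / θ` one has `γ θ = θ - 1` and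
`(γ - 1) θ = -1`, so raising this bound to the power `θ` and summing over `k` produces the
harmonic sum, whence the logarithm. -/

theorem rpow_sub_rpow_le_sub_mul_rpow {x y γ : ℝ} (hy : 0 ≤ y) (hyx : y ≤ x) (hγ : γ ≤ 1) :
    x ^ γ - y ^ γ ≤ (x - y) * x ^ (γ - 1) := by
  have rpow_eq_mul {z : ℝ} (hz : 0 < z) : z ^ γ = z * z ^ (γ - 1) := by
    rw [Real.rpow_sub_one hz.ne', mul_div_cancel₀ _ hz.ne']
  rcases hyx.eq_or_lt with rfl | hyx
  · simp
  have hx : 0 < x := hy.trans_lt hyx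
  have hyγ : y * x ^ (γ - 1) ≤ y ^ γ := by
    rcases hy.eq_or_lt with rfl | hy
    · simpa using Real.rpow_nonneg le_rfl γ
    · rw [rpow_eq_mul hy]
      exact mul_le_mul_of_nonneg_left
        (Real.rpow_le_rpow_of_nonpos hy hyx.le (sub_nonpos.2 hγ)) hy.le
  rw [sub_mul, ← rpow_eq_mul hx]
  exact sub_le_sub_left hyγ _

theorem sum_Icc_inv_le_one_add_log (n : ℕ) :
    ∑ k ∈ Icc 1 n, (k : ℝ)⁻¹ ≤ 1 + Real.log n := by
  simpa [harmonic_eq_sum_Icc] using harmonic_le_one_add_log n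

/-- The step size `s_k = t_k - t_{k-1}` of the power time grid `t_k = k^γ T / n^γ`. The difference
`k - 1` is taken in `ℝ`, so this is meaningful for `1 ≤ k` only. -/
noncomputable def powerGridStep (T γ : ℝ) (n k : ℕ) : ℝ :=
  T * ((k : ℝ) ^ γ - ((k : ℝ) - 1) ^ γ) / (n : ℝ) ^ γ

section PowerGrid

variable {T γ θ : ℝ} {k : ℕ}

theorem powerGridStep_nonneg (hT : 0 ≤ T) (hγ : 0 ≤ γ) (n : ℕ) (hk : 1 ≤ k) :
    0 ≤ powerGridStep T γ n k := by
  have hk' : (0 : ℝ) ≤ k - 1 := sub_nonneg.2 (Nat.one_le_cast.2 hk)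
  have hdiff : (0 : ℝ) ≤ (k : ℝ) ^ γ - ((k : ℝ) - 1) ^ γ :=
    sub_nonneg.2 (Real.rpow_le_rpow hk' (sub_le_self _ zero_le_one) hγ)
  unfold powerGridStep
  positivity

theorem powerGridStep_le (hT : 0 ≤ T) (hγ : γ ≤ 1) (n : ℕ) (hk : 1 ≤ k) :
    powerGridStep T γ n k ≤ T * (k : ℝ) ^ (γ - 1) / (n : ℝ) ^ γ := by
  have hk' : (0 : ℝ) ≤ k - 1 := sub_nonneg.2 (Nat.one_le_cast.2 hk)
  have hdiff : (k : ℝ) ^ γ - ((k : ℝ) - 1) ^ γ ≤ (k : ℝ) ^ (γ - 1) := by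
    simpa using rpow_sub_rpow_le_sub_mul_rpow hk' (sub_le_self _ zero_le_one) hγ
  unfold powerGridStep
  gcongr

theorem powerGridStep_rpow_le (hT : 0 ≤ T) (hγ₀ : 0 ≤ γ) (hγ₁ : γ ≤ 1) (hθ : 0 ≤ θ) (n : ℕ)
    (hk : 1 ≤ k) :
    powerGridStep T γ n k ^ θ ≤
      T ^ θ * (n : ℝ) ^ (-(γ * θ)) * (k : ℝ) ^ ((γ - 1) * θ) :=
  calc powerGridStep T γ n k ^ θ
      ≤ (T * (k : ℝ) ^ (γ - 1) / (n : ℝ) ^ γ) ^ θ :=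
        Real.rpow_le_rpow (powerGridStep_nonneg hT hγ₀ n hk) (powerGridStep_le hT hγ₁ n hk) hθ
    _ = T ^ θ * (k : ℝ) ^ ((γ - 1) * θ) / (n : ℝ) ^ (γ * θ) := by
        rw [Real.div_rpow (by positivity) (by positivity), Real.mul_rpow hT (by positivity),
          ← Real.rpow_mul k.cast_nonneg, ← Real.rpow_mul n.cast_nonneg]
    _ = T ^ θ * (n : ℝ) ^ (-(γ * θ)) * (k : ℝ) ^ ((γ - 1) * θ) := by
        rw [Real.rpow_neg n.cast_nonneg, div_eq_mul_inv, mul_right_comm]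

theorem sum_powerGridStep_rpow_le (hT : 0 ≤ T) (hγ₀ : 0 ≤ γ) (hγ₁ : γ ≤ 1) (hθ : 0 ≤ θ)
    (n : ℕ) :
    ∑ k ∈ Icc 1 n, powerGridStep T γ n k ^ θ ≤
      T ^ θ * (n : ℝ) ^ (-(γ * θ)) * ∑ k ∈ Icc 1 n, (k : ℝ) ^ ((γ - 1) * θ) := by
  rw [mul_sum]
  exact sum_le_sum fun k hk => powerGridStep_rpow_le hT hγ₀ hγ₁ hθ n (mem_Icc.1 hk).1

end PowerGrid

/-- For the power time grid with step sizes `s_k = T (k^γ - (k-1)^γ) / n^γ`,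
if `θ > 1` and `γ = (θ-1)/θ`, then there is a constant `C > 0` (depending only
on `T`, `θ`) with `∑_{k=1}^n s_k^θ ≤ C n^(-(θ-1)) (1 + log n)` for all `n ≥ 1`. -/
theorem power_grid_sum_pow_bound_critical_gamma (T θ : ℝ) (hT : 0 < T) (hθ : 1 < θ) :
    ∃ C : ℝ, 0 < C ∧ ∀ n : ℕ, 0 < n →
      ∑ k ∈ Finset.Icc 1 n,
          (T * ((k : ℝ) ^ ((θ - 1) / θ) - ((k : ℝ) - 1) ^ ((θ - 1) / θ)) /
              (n : ℝ) ^ ((θ - 1) / θ)) ^ θ ≤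
        C * (n : ℝ) ^ (-(θ - 1)) * (1 + Real.log n) := by
  have hθ₀ : 0 < θ := zero_lt_one.trans hθ
  have hγ₀ : 0 ≤ (θ - 1) / θ := div_nonneg (sub_nonneg.2 hθ.le) hθ₀.le
  have hγ₁ : (θ - 1) / θ ≤ 1 := (div_le_one hθ₀).2 (sub_le_self _ zero_le_one)
  have hγθ : (θ - 1) / θ * θ = θ - 1 := div_mul_cancel₀ _ hθ₀.ne'
  have hγθ' : ((θ - 1) / θ - 1) * θ = -1 := by rw [sub_mul, hγθ]; ring
  refine ⟨T ^ θ, Real.rpow_pos_of_pos hT θ, fun n _ => ?_⟩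
  calc ∑ k ∈ Icc 1 n, powerGridStep T ((θ - 1) / θ) n k ^ θ
      ≤ T ^ θ * (n : ℝ) ^ (-(θ - 1)) * ∑ k ∈ Icc 1 n, (k : ℝ)⁻¹ := by
        simpa only [hγθ, hγθ', Real.rpow_neg_one] using
          sum_powerGridStep_rpow_le hT.le hγ₀ hγ₁ hθ₀.le n
    _ ≤ T ^ θ * (n : ℝ) ^ (-(θ - 1)) * (1 + Real.log n) := by
        gcongr
        exact sum_Icc_inv_le_one_add_log n
end

section
/- Under the semigroup approximation hypotheses, for every positive integer n, every partition 0 = t_0 < t_1 < ⋯ < t_n = T with step sizes s_k = t_k − t_{k−1}, and every x ∈ F, one has ‖P_T x − Q_{(s_n)} ∘ Q_{(s_{n−1})} ∘ ⋯ ∘ Q_{(s_1)} x‖ ≤ A Φ(x) ∑_{k=1}^{n} M^{n−k} s_k^θ. -/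
/-!
Follow the exact flow in the same steps `s_k` as the approximation: by the semigroup law,
`P_T = P_{s_n} ∘ ⋯ ∘ P_{s_1}`. Replacing `P_{s_k}` by `Q_{(s_k)}` at the exact point
`P_{s_{k-1}} ⋯ P_{s_1} x`, where `Φ` is still at most `Φ x`, costs `A s_k^θ Φ x`, and the later
steps `Q_{(s_{k+1})}, …, Q_{(s_n)}` amplify this error by at most `M^{n-k}`.
-/

open Finset

variable {F : Type*} [NormedAddCommGroup F] [NormedSpace ℝ F]

/-- The composition `R_m ∘ ⋯ ∘ R_1` of the linear maps `R_1, …, R_m`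
(with `R_1` applied first); the empty composition is the identity map. -/
def compUpTo (R : ℕ → (F →ₗ[ℝ] F)) : ℕ → (F →ₗ[ℝ] F)
  | 0 => LinearMap.id
  | m + 1 => (R (m + 1)).comp (compUpTo R m)

theorem apply_compUpTo_le {α : Type*} [Preorder α] {R : ℕ → (F →ₗ[ℝ] F)} {Φ : F → α} {n : ℕ}
    (hΦ : ∀ k < n, ∀ x, Φ (R (k + 1) x) ≤ Φ x) (x : F) : Φ (compUpTo R n x) ≤ Φ x := by
  induction n with
  | zero => exact le_rfl
  | succ n ih =>
    exact (hΦ n n.lt_succ_self _).trans (ih fun k hk => hΦ k (hk.trans n.lt_succ_self))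

theorem compUpTo_eq_apply_sum {T : ℝ} {P : ℝ → (F →ₗ[ℝ] F)}
    (hP : ∀ s t : ℝ, 0 ≤ s → 0 ≤ t → s + t ≤ T → P (s + t) = (P s).comp (P t))
    {s : ℕ → ℝ} {n : ℕ} (hn : 0 < n) (hs : ∀ k < n, 0 ≤ s (k + 1))
    (hsum : ∑ k ∈ range n, s (k + 1) ≤ T) :
    compUpTo (fun k => P (s k)) n = P (∑ k ∈ range n, s (k + 1)) := by
  induction n with
  | zero => exact absurd hn (lt_irrefl 0)
  | succ n ih =>
    obtain rfl | hn_init := n.eq_zero_or_pos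
    · simp [compUpTo]
    have hs_init : ∀ k < n, 0 ≤ s (k + 1) := fun k hk => hs k (hk.trans n.lt_succ_self)
    have hs_last : 0 ≤ s (n + 1) := hs n n.lt_succ_self
    have hsum_nonneg : 0 ≤ ∑ k ∈ range n, s (k + 1) :=
      sum_nonneg fun k hk => hs_init k (mem_range.mp hk)
    rw [sum_range_succ_comm] at hsum ⊢
    rw [hP _ _ hs_last hsum_nonneg hsum, ← ih hn_init hs_init (by linarith), compUpTo]

theorem sum_prod_Ioc_succ_mul {R : Type*} [CommSemiring R] (M ε : ℕ → R) (n : ℕ) :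
    ∑ k ∈ Icc 1 (n + 1), (∏ j ∈ Ioc k (n + 1), M j) * ε k =
      M (n + 1) * ∑ k ∈ Icc 1 n, (∏ j ∈ Ioc k n, M j) * ε k + ε (n + 1) := by
  rw [sum_Icc_succ_top (by lia), Ioc_self, prod_empty, one_mul, mul_sum]
  congr 1
  refine sum_congr rfl fun k hk => ?_
  rw [prod_Ioc_succ_top (mem_Icc.mp hk).2]
  ring

theorem norm_sub_compUpTo_le {R : ℕ → (F →ₗ[ℝ] F)} {M ε : ℕ → ℝ} {y : ℕ → F} {n : ℕ}
    (hM : ∀ k < n, 0 ≤ M (k + 1)) (hR : ∀ k < n, ∀ x, ‖R (k + 1) x‖ ≤ M (k + 1) * ‖x‖)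
    (hy : ∀ k < n, ‖y (k + 1) - R (k + 1) (y k)‖ ≤ ε (k + 1)) :
    ‖y n - compUpTo R n (y 0)‖ ≤ ∑ k ∈ Icc 1 n, (∏ j ∈ Ioc k n, M j) * ε k := by
  induction n with
  | zero => simp [compUpTo]
  | succ n ih =>
    have hlast := n.lt_succ_self
    have herror : ‖y n - compUpTo R n (y 0)‖ ≤ ∑ k ∈ Icc 1 n, (∏ j ∈ Ioc k n, M j) * ε k :=
      ih (fun k hk => hM k (hk.trans hlast)) (fun k hk => hR k (hk.trans hlast))
        fun k hk => hy k (hk.trans hlast)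
    calc ‖y (n + 1) - compUpTo R (n + 1) (y 0)‖
        = ‖R (n + 1) (y n - compUpTo R n (y 0)) + (y (n + 1) - R (n + 1) (y n))‖ := by
          rw [map_sub, sub_add_sub_cancel', compUpTo, LinearMap.comp_apply]
      _ ≤ M (n + 1) * ‖y n - compUpTo R n (y 0)‖ + ε (n + 1) :=
          norm_add_le_of_le (hR n hlast _) (hy n hlast)
      _ ≤ M (n + 1) * ∑ k ∈ Icc 1 n, (∏ j ∈ Ioc k n, M j) * ε k + ε (n + 1) := by
          gcongr
          exact hM n hlast
      _ = ∑ k ∈ Icc 1 (n + 1), (∏ j ∈ Ioc k (n + 1), M j) * ε k :=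
          (sum_prod_Ioc_succ_mul M ε n).symm

theorem semigroup_approx_partition_bound_general {T : ℝ} {P Q : ℝ → (F →ₗ[ℝ] F)} {Φ : F → ℝ}
    {M ε : ℝ → ℝ} (hM : ∀ s, 0 < s → s ≤ T → 0 ≤ M s) (hε : ∀ s, 0 < s → s ≤ T → 0 ≤ ε s)
    (hsemi : ∀ s t : ℝ, 0 ≤ s → 0 ≤ t → s + t ≤ T → P (s + t) = (P s).comp (P t))
    (hΦ : ∀ s, 0 < s → s ≤ T → ∀ x, Φ (P s x) ≤ Φ x)
    (hQbdd : ∀ s, 0 < s → s ≤ T → ∀ x, ‖Q s x‖ ≤ M s * ‖x‖)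
    (hQerr : ∀ s, 0 < s → s ≤ T → ∀ x, ‖P s x - Q s x‖ ≤ ε s * Φ x)
    {n : ℕ} (hn : 0 < n) {t : ℕ → ℝ} (ht0 : t 0 = 0) (htn : t n = T)
    (ht : ∀ k < n, t k < t (k + 1)) (x : F) :
    ‖P T x - compUpTo (fun k => Q (t k - t (k - 1))) n x‖ ≤
      ∑ k ∈ Icc 1 n, (∏ j ∈ Ioc k n, M (t j - t (j - 1))) * (ε (t k - t (k - 1)) * Φ x) := by
  set s : ℕ → ℝ := fun k => t k - t (k - 1)
  have hs_pos : ∀ k < n, 0 < s (k + 1) := fun k hk => sub_pos.mpr (ht k hk)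
  have hs_sum : ∑ k ∈ range n, s (k + 1) = T :=
    (sum_range_sub t n).trans (by rw [ht0, htn, sub_zero])
  have hs_le : ∀ k < n, s (k + 1) ≤ T := fun k hk =>
    hs_sum ▸ single_le_sum (f := fun k => s (k + 1))
      (fun j hj => (hs_pos j (mem_range.mp hj)).le) (mem_range.mpr hk)
  have hexact : compUpTo (fun k => P (s k)) n = P T :=
    (compUpTo_eq_apply_sum hsemi hn (fun k hk => (hs_pos k hk).le) hs_sum.le).trans (by rw [hs_sum])
  have hΦ_exact : ∀ k < n, Φ (compUpTo (fun k => P (s k)) k x) ≤ Φ x := fun k hk =>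
    apply_compUpTo_le (fun j hj => hΦ _ (hs_pos j (hj.trans hk)) (hs_le j (hj.trans hk))) x
  rw [← hexact]
  exact norm_sub_compUpTo_le (y := fun k => compUpTo (fun k => P (s k)) k x)
    (M := fun k => M (s k)) (ε := fun k => ε (s k) * Φ x)
    (fun k hk => hM _ (hs_pos k hk) (hs_le k hk))
    (fun k hk => hQbdd _ (hs_pos k hk) (hs_le k hk))
    fun k hk => (hQerr _ (hs_pos k hk) (hs_le k hk) _).trans
      (mul_le_mul_of_nonneg_left (hΦ_exact k hk) (hε _ (hs_pos k hk) (hs_le k hk)))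

/-- Semigroup approximation: if `(P_t)` is a contraction semigroup on `[0,T]`,
`Φ` is nonnegative and nonincreasing along `P`, and `(Q_(s))` are linear maps
with `‖Q_(s) x‖ ≤ M ‖x‖` and one-step error `‖P_s x − Q_(s) x‖ ≤ A s^θ Φ(x)`,
then for any partition `0 = t_0 < t_1 < ⋯ < t_n = T` with steps
`s_k = t_k − t_{k−1}`,
`‖P_T x − Q_(s_n) ∘ ⋯ ∘ Q_(s_1) x‖ ≤ A Φ(x) ∑_{k=1}^n M^{n−k} s_k^θ`. -/
theorem semigroup_approx_partition_bound
    (T : ℝ) (hT : 0 < T)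
    (P : ℝ → (F →ₗ[ℝ] F)) (Q : ℝ → (F →ₗ[ℝ] F)) (Φ : F → ℝ)
    (A θ M : ℝ) (hA : 0 ≤ A) (hθ : 0 < θ) (hM : 1 ≤ M)
    (hsemi : ∀ s t : ℝ, 0 ≤ s → 0 ≤ t → s + t ≤ T → P (s + t) = (P s).comp (P t))
    (hPcontr : ∀ t : ℝ, 0 ≤ t → t ≤ T → ∀ x : F, ‖P t x‖ ≤ ‖x‖)
    (hΦnonneg : ∀ x : F, 0 ≤ Φ x)
    (hΦ : ∀ t : ℝ, 0 ≤ t → t ≤ T → ∀ x : F, Φ (P t x) ≤ Φ x)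
    (hQbdd : ∀ s : ℝ, 0 < s → s ≤ T → ∀ x : F, ‖Q s x‖ ≤ M * ‖x‖)
    (hQerr : ∀ s : ℝ, 0 < s → s ≤ T → ∀ x : F, ‖P s x - Q s x‖ ≤ A * s ^ θ * Φ x)
    (n : ℕ) (hn : 0 < n) (t : ℕ → ℝ)
    (ht0 : t 0 = 0) (htn : t n = T) (hmono : ∀ k, k < n → t k < t (k + 1))
    (x : F) :
    ‖P T x - compUpTo (fun k => Q (t k - t (k - 1))) n x‖ ≤
      A * Φ x * ∑ k ∈ Finset.Icc 1 n, M ^ (n - k) * (t k - t (k - 1)) ^ θ := by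
  refine (semigroup_approx_partition_bound_general (fun _ _ _ => zero_le_one.trans hM)
    (fun s hs _ => by positivity) hsemi (fun s hs => hΦ s hs.le) hQbdd hQerr hn ht0 htn hmono
    x).trans_eq ?_
  simp only [prod_const, Nat.card_Ioc, mul_sum]
  exact sum_congr rfl fun k _ => by ring
end
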